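/- Let Ω ⊂ ℂ be a compact set whose boundary ∂Ω is a C¹ simple closed curve, positively oriented, parametrized by γ. Let k ∈ ℂ with k ≠ 0 and let z ∈ ℂ \ ∂Ω. Then ∫_Ω e^{\bar{k}\bar{w} − kw}/(z − w) dL(w) = (1/(2i\bar{k})) ∮_{∂Ω} e^{\bar{k}\bar{w} − kw}/(z − w) dw + (π/\bar{k}) e^{\bar{k}\bar{z} − kz} · 1_Ω(z), where L denotes the Lebesgue measure on ℂ and 1_Ω is the indicator function of Ω. -/

import Mathlib

open MeasureTheory Set Metric
open Complex ComplexConjugate Filter Function Topology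
open scoped ContDiff Interval Manifold

/-!
Write `K w = (z - w)⁻¹ • ∂f/∂w̄`. For a compactly supported `C¹` function `f`, integrating `K` over
the whole plane in polar coordinates about `z` splits `∂f/∂w̄` into a radial derivative, which
integrates to a multiple of `f z` along every ray, and an angular derivative, which integrates to
`0` over every circle; hence `∫ K = π f z` for every `z`.

Insert this representation of `f` at the points of a curve `γ` into `∮ f ζ / (z - ζ) dζ`. By Fubini
and the partial fractions `1 / ((z - ζ)(ζ - w)) = (1 / (ζ - w) - 1 / (ζ - z)) / (z - w)` the result
is the integral of `K w` against the difference of the winding numbers of `γ` about `w` and about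
`z`. When the winding number is the indicator function of `Ω`, this is the Cauchy–Pompeiu formula
for `Ω`, so Stokes' theorem on `Ω` is never needed. The theorem is the case
`f w = exp (k̄ w̄ - k w)`, for which `∂f/∂w̄ = k̄ f`.
-/

theorem indicator_one_smul_apply {α R M : Type*} [MonoidWithZero R] [AddMonoid M]
    [MulActionWithZero R M] (s : Set α) (f : α → M) (a : α) :
    s.indicator (1 : α → R) a • f a = s.indicator f a := by
  simp [← indicator_smul_apply_left]

theorem image_uIcc_eq_of_image_Ico_eq {X : Type*} [TopologicalSpace X] {γ : ℝ → X} {a b : ℝ}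
    {S : Set X} (hγ : Continuous γ) (hab : a < b) (hS : IsClosed S) (himg : γ '' Ico a b = S) :
    γ '' uIcc a b = S := by
  rw [uIcc_of_le hab.le]
  refine subset_antisymm ?_ (himg ▸ image_mono Ico_subset_Icc_self)
  rw [← closure_Ico hab.ne, ← hS.closure_eq, ← himg]
  exact image_closure_subset_closure_image hγ

section Real

variable {E F : Type*} [NormedAddCommGroup E] [NormedSpace ℝ E] [NormedAddCommGroup F]
  [NormedSpace ℝ F]

theorem exists_contDiff_hasCompactSupport_eventuallyEq_nhdsSet [FiniteDimensional ℝ F]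
    {n : ℕ∞} {f : F → E} {K : Set F} (hK : IsCompact K)
    (hf : ∀ᶠ x in 𝓝ˢ K, ContDiffAt ℝ n f x) :
    ∃ g : F → E, ContDiff ℝ n g ∧ HasCompactSupport g ∧ g =ᶠ[𝓝ˢ K] f := by
  obtain ⟨U, hU, hKU, hfU⟩ := mem_nhdsSet_iff_exists.mp hf
  obtain ⟨K', hK', hKK', hK'U⟩ := exists_compact_between hK hU hKU
  obtain ⟨χ, hχ_one, hχ_zero, -⟩ :=
    exists_contMDiffMap_one_nhds_of_subset_interior 𝓘(ℝ, F) (n := n) hK.isClosed hKK'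
  have hsupp : tsupport χ ⊆ K' :=
    closure_minimal (fun x hx ↦ by_contra fun h ↦ hx (hχ_zero x h)) hK'.isClosed
  refine ⟨fun x ↦ χ x • f x, contDiff_iff_contDiffAt.mpr fun x ↦ ?_,
    .smul_right (.of_isClosed_subset hK' (isClosed_tsupport χ) hsupp),
    hχ_one.mono fun x hx ↦ by simp [hx]⟩
  by_cases hx : x ∈ tsupport χ
  · exact χ.contMDiff.contDiff.contDiffAt.smul (hfU (hK'U (hsupp hx)))
  · refine (contDiffAt_const (c := 0)).congr_of_eventuallyEq ?_
    filter_upwards [notMem_tsupport_iff_eventuallyEq.mp hx] with y hy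
    simp [hy]

theorem addHaar_image_eq_zero_of_finrank_lt [FiniteDimensional ℝ E] [FiniteDimensional ℝ F]
    [MeasurableSpace E] [BorelSpace E] (μ : Measure E) [μ.IsAddHaarMeasure] {f : F → E}
    (hf : ContDiff ℝ 1 f) (hdim : Module.finrank ℝ F < Module.finrank ℝ E) (s : Set F) :
    μ (f '' s) = 0 := by
  have hdimH : dimH (f '' s) < (Module.finrank ℝ E : NNReal) :=
    (dimH_mono (image_subset_range f s)).trans_lt <|
      hf.dimH_range_le.trans_lt (by exact_mod_cast hdim)
  refine measure_zero_of_dimH_lt ?_ hdimH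
  exact_mod_cast Measure.absolutelyContinuous_isAddHaarMeasure μ
    (Measure.hausdorffMeasure (Module.finrank ℝ E))

theorem integral_Ioi_fderiv_add_smul [CompleteSpace E] {f : F → E} (hf : ContDiff ℝ 1 f)
    (hc : HasCompactSupport f) (x : F) {v : F} (hv : v ≠ 0) :
    ∫ r in Ioi (0 : ℝ), fderiv ℝ f (x + r • v) v = -f x := by
  have hderiv (r : ℝ) : deriv (fun r : ℝ ↦ f (x + r • v)) r = fderiv ℝ f (x + r • v) v := by
    have hray : HasDerivAt (fun r : ℝ ↦ x + r • v) v r := by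
      simpa using ((hasDerivAt_id r).smul_const v).const_add x
    exact ((hf.differentiable one_ne_zero _).hasFDerivAt.comp_hasDerivAt r hray).deriv
  have hemb : IsClosedEmbedding fun r : ℝ ↦ x + r • v :=
    (Homeomorph.addLeft x).isClosedEmbedding.comp (isClosedEmbedding_smul_left hv)
  have hray : ContDiff ℝ 1 fun r : ℝ ↦ f (x + r • v) := hf.comp (by fun_prop)
  simpa [hderiv] using (hc.comp_isClosedEmbedding hemb).integral_Ioi_deriv_eq hray 0

theorem integral_Ioo_fderiv_circleMap_eq_zero [CompleteSpace E] {f : ℂ → E} (hf : ContDiff ℝ 1 f)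
    (z : ℂ) {r : ℝ} (hr : r ≠ 0) :
    ∫ θ in Ioo (-Real.pi) Real.pi, fderiv ℝ f (circleMap z r θ) (I * exp (θ * I)) = 0 := by
  have hderiv (θ : ℝ) : HasDerivAt (fun θ ↦ f (circleMap z r θ))
      (r • fderiv ℝ f (circleMap z r θ) (I * exp (θ * I))) θ := by
    have hvel : circleMap 0 r θ * I = r • (I * exp (θ * I)) := by
      rw [circleMap_zero, real_smul]
      ring
    rw [← map_smul, ← hvel]
    exact (hf.differentiable one_ne_zero _).hasFDerivAt.comp_hasDerivAt θ (hasDerivAt_circleMap ..)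
  have hcont : Continuous fun θ : ℝ ↦ r • fderiv ℝ f (circleMap z r θ) (I * exp (θ * I)) := by
    have := hf.continuous_fderiv one_ne_zero
    fun_prop
  have hperiod : circleMap z r Real.pi = circleMap z r (-Real.pi) := by
    have := periodic_circleMap z r (-Real.pi)
    rwa [show -Real.pi + 2 * Real.pi = Real.pi by ring] at this
  have hFTC := intervalIntegral.integral_eq_sub_of_hasDerivAt (fun θ _ ↦ hderiv θ)
    (hcont.intervalIntegrable (-Real.pi) Real.pi)
  rw [hperiod, sub_self, intervalIntegral.integral_smul,
    intervalIntegral.integral_of_le (neg_le_self Real.pi_pos.le), integral_Ioc_eq_integral_Ioo]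
    at hFTC
  exact (smul_eq_zero.mp hFTC).resolve_left hr

theorem integrableOn_clm_circleMap {A : ℂ → ℂ →L[ℝ] E} (hA : Continuous A)
    (hc : HasCompactSupport A) {v : ℝ → ℂ} (hv : Continuous v) (z : ℂ) :
    IntegrableOn (fun p : ℝ × ℝ ↦ A (circleMap z p.1 p.2) (v p.2))
      (Ioi 0 ×ˢ Ioo (-Real.pi) Real.pi) := by
  obtain ⟨R, hR⟩ := hc.isCompact.isBounded.subset_closedBall z
  have hcont : Continuous fun p : ℝ × ℝ ↦ A (circleMap z p.1 p.2) (v p.2) := by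
    unfold circleMap
    fun_prop
  have hint : IntegrableOn (fun p : ℝ × ℝ ↦ A (circleMap z p.1 p.2) (v p.2))
      (Icc 0 R ×ˢ Icc (-Real.pi) Real.pi) :=
    hcont.continuousOn.integrableOn_compact (isCompact_Icc.prod isCompact_Icc)
  refine hint.of_forall_sdiff_eq_zero (measurableSet_Ioi.prod measurableSet_Ioo) ?_
  rintro ⟨r, θ⟩ ⟨⟨hr : 0 < r, hθ⟩, hnot⟩
  have hrR : R < r := by
    by_contra! h
    exact hnot ⟨⟨hr.le, h⟩, Ioo_subset_Icc_self hθ⟩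
  have hzero : A (circleMap z r θ) = 0 := by
    refine image_eq_zero_of_notMem_tsupport fun h ↦ hrR.not_ge ?_
    simpa [circleMap, dist_eq_norm, abs_of_pos hr] using hR h
  simp [hzero]

end Real

section Dbar

variable {E : Type*} [NormedAddCommGroup E] [NormedSpace ℂ E] {f g : ℂ → E} {w : ℂ}

/-- The Wirtinger derivative `∂f/∂w̄` of a real-differentiable function of a complex variable. -/
noncomputable def dbar (f : ℂ → E) (w : ℂ) : E :=
  (2⁻¹ : ℂ) • (fderiv ℝ f w 1 + I • fderiv ℝ f w I)

theorem dbar_congr (h : f =ᶠ[𝓝 w] g) : dbar f w = dbar g w := by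
  rw [dbar, dbar, h.fderiv_eq]

theorem continuous_dbar (hf : ContDiff ℝ 1 f) : Continuous (dbar f) := by
  have := hf.continuous_fderiv one_ne_zero
  unfold dbar
  fun_prop

theorem hasCompactSupport_dbar (hf : HasCompactSupport f) : HasCompactSupport (dbar f) :=
  (hf.fderiv ℝ).mono fun w hw h ↦ hw (by simp [dbar, h])

theorem conj_smul_dbar (f : ℂ → E) (w u : ℂ) :
    conj u • dbar f w = (2⁻¹ : ℂ) • (fderiv ℝ f w u + I • fderiv ℝ f w (I * u)) := by
  have hu : u = u.re • (1 : ℂ) + u.im • I := by simp [re_add_im]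
  have hIu : I * u = u.re • I - u.im • (1 : ℂ) := by apply Complex.ext <;> simp
  have hconj : conj u = u.re - u.im * I := by apply Complex.ext <;> simp
  rw [hIu, map_sub, map_smul, map_smul, hconj, dbar]
  nth_rw 3 [hu]
  rw [map_add, map_smul, map_smul]
  simp only [← coe_smul]
  match_scalars
  · ring
  · linear_combination (-u.im / 2) * I_sq

theorem dbar_exp_mul_conj_sub_mul (a b w : ℂ) :
    dbar (fun v ↦ exp (a * conj v - b * v)) w = a * exp (a * conj w - b * w) := by
  have hconj : HasFDerivAt (fun v : ℂ ↦ conj v) (conjCLE : ℂ →L[ℝ] ℂ) w := conjCLE.hasFDerivAt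
  have hid : HasFDerivAt (fun v : ℂ ↦ v) (.id ℝ ℂ) w := hasFDerivAt_id w
  rw [dbar, ((hconj.const_mul a).fun_sub (hid.const_mul b)).cexp.fderiv]
  simp only [smul_apply, sub_apply, ContinuousLinearEquiv.coe_coe,
    ContinuousAlgEquiv.coeCLE_apply, conjCAE_apply, map_one, smul_eq_mul, mul_one,
    ContinuousLinearMap.id_apply, conj_I, mul_neg]
  linear_combination (-exp (a * conj w - b * w) * (a + b) / 2) * I_sq

end Dbar

section Plane

variable {E : Type*} [NormedAddCommGroup E] [NormedSpace ℂ E] {f : ℂ → E}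

theorem integral_inv_sub_smul_eq_integral_polarCoord (g : ℂ → E) (z : ℂ) :
    ∫ w, (z - w)⁻¹ • g w =
      -∫ p in Ioi (0 : ℝ) ×ˢ Ioo (-Real.pi) Real.pi,
        conj (exp (p.2 * I)) • g (circleMap z p.1 p.2) := by
  rw [← integral_add_left_eq_self _ z, ← Complex.integral_comp_polarCoord_symm, ← integral_neg]
  refine setIntegral_congr_fun (measurableSet_Ioi.prod measurableSet_Ioo) fun p hp ↦ ?_
  have hr : (p.1 : ℂ) ≠ 0 := ofReal_ne_zero.mpr (ne_of_gt hp.1)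
  have hsymm : Complex.polarCoord.symm p = p.1 * exp (p.2 * I) := by
    rw [Complex.polarCoord_symm_apply, exp_mul_I, ofReal_cos, ofReal_sin]
  have hconj : conj (exp (p.2 * I)) = (exp (p.2 * I))⁻¹ := by
    rw [← exp_conj, map_mul, conj_ofReal, conj_I, mul_neg, exp_neg]
  simp only [hsymm, hconj, circleMap]
  rw [← coe_smul, smul_smul, ← neg_smul]
  congr 1
  field_simp
  ring

theorem integral_inv_sub_smul_dbar [CompleteSpace E] (hf : ContDiff ℝ 1 f)
    (hc : HasCompactSupport f) (z : ℂ) :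
    ∫ w, (z - w)⁻¹ • dbar f w = (Real.pi : ℂ) • f z := by
  have hD := hf.continuous_fderiv one_ne_zero
  have hrad := integrableOn_clm_circleMap hD (hc.fderiv ℝ) (v := fun θ ↦ exp (θ * I))
    (by fun_prop) z
  have htan := integrableOn_clm_circleMap hD (hc.fderiv ℝ) (v := fun θ ↦ I * exp (θ * I))
    (by fun_prop) z
  have hrad_eq : ∫ p in Ioi (0 : ℝ) ×ˢ Ioo (-Real.pi) Real.pi,
      fderiv ℝ f (circleMap z p.1 p.2) (exp (p.2 * I)) = -((2 * Real.pi : ℂ) • f z) := by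
    have hray (θ : ℝ) : ∫ r in Ioi (0 : ℝ), fderiv ℝ f (circleMap z r θ) (exp (θ * I)) = -f z := by
      simpa [circleMap] using integral_Ioi_fderiv_add_smul hf hc z (exp_ne_zero (θ * I))
    rw [Measure.volume_eq_prod, ← setIntegral_prod_swap, setIntegral_prod]
    · simp [hray, ← coe_smul, two_mul, add_nonneg Real.pi_pos.le Real.pi_pos.le]
    · exact hrad.swap
  have htan_eq : ∫ p in Ioi (0 : ℝ) ×ˢ Ioo (-Real.pi) Real.pi,
      fderiv ℝ f (circleMap z p.1 p.2) (I * exp (p.2 * I)) = 0 := by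
    rw [Measure.volume_eq_prod, setIntegral_prod _ htan]
    exact setIntegral_eq_zero_of_forall_eq_zero fun r hr ↦
      integral_Ioo_fderiv_circleMap_eq_zero hf z (ne_of_gt hr)
  rw [integral_inv_sub_smul_eq_integral_polarCoord]
  simp only [conj_smul_dbar]
  rw [integral_smul, integral_add hrad (htan.fun_smul I), integral_smul, hrad_eq, htan_eq]
  module

end Plane

section Curve

variable {E : Type*} [NormedAddCommGroup E] [NormedSpace ℂ E] {f g : ℂ → E} {γ : ℝ → ℂ} {a b : ℝ}
  {z : ℂ}

theorem locallyIntegrable_inv_norm : LocallyIntegrable fun w : ℂ ↦ ‖w‖⁻¹ :=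
  locallyIntegrable_of_norm_le_rpow (C := 1) (α := 1) (by simp) (by simp)
    (.of_forall fun w ↦ by simp [Real.rpow_neg_one]) (by fun_prop)

theorem integrable_inv_sub_smul (hg : Continuous g) (hc : HasCompactSupport g) (z : ℂ) :
    Integrable fun w ↦ (z - w)⁻¹ • g w := by
  have hnorm := hc.norm.convolutionExists_left (ContinuousLinearMap.mul ℝ ℝ) hg.norm
    locallyIntegrable_inv_norm z
  have hmeas : AEStronglyMeasurable (fun w ↦ (z - w)⁻¹ • g w) volume :=
    AEStronglyMeasurable.smul (by fun_prop) hg.aestronglyMeasurable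
  refine (integrable_norm_iff hmeas).mp (hnorm.congr (.of_forall fun w ↦ ?_))
  simp [norm_smul, mul_comm]

theorem continuous_integral_norm_inv_sub_smul (hg : Continuous g) (hc : HasCompactSupport g) :
    Continuous fun z ↦ ∫ w, ‖(z - w)⁻¹ • g w‖ := by
  refine (hc.norm.continuous_convolution_left (ContinuousLinearMap.mul ℝ ℝ) hg.norm
    locallyIntegrable_inv_norm).congr fun z ↦ integral_congr_ae (.of_forall fun w ↦ ?_)
  simp [norm_smul, mul_comm]

theorem integrable_prod_inv_sub_smul {φ : ℝ → ℂ} (hγ : Continuous γ)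
    (hφ : IntegrableOn φ (Ι a b)) (hg : Continuous g) (hc : HasCompactSupport g) :
    Integrable (uncurry fun t w ↦ φ t • (γ t - w)⁻¹ • g w)
      ((volume.restrict (Ι a b)).prod volume) := by
  have hmeas : AEStronglyMeasurable (uncurry fun t w ↦ φ t • (γ t - w)⁻¹ • g w)
      ((volume.restrict (Ι a b)).prod volume) :=
    hφ.aestronglyMeasurable.comp_fst.smul <| AEStronglyMeasurable.smul
      (f := fun p : ℝ × ℂ ↦ (γ p.1 - p.2)⁻¹) (g := fun p : ℝ × ℂ ↦ g p.2)
      (by fun_prop) (by fun_prop)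
  refine (integrable_prod_iff hmeas).mpr
    ⟨.of_forall fun t ↦ (integrable_inv_sub_smul hg hc (γ t)).smul (φ t), ?_⟩
  have hcont : Continuous fun t ↦ ∫ w, ‖(γ t - w)⁻¹ • g w‖ :=
    (continuous_integral_norm_inv_sub_smul hg hc).comp hγ
  have hnorm : IntervalIntegrable (fun t ↦ ‖φ t‖) volume a b :=
    intervalIntegrable_iff.mpr hφ.norm
  simp only [uncurry, norm_smul (φ _), integral_const_mul]
  exact (hnorm.mul_continuousOn hcont.continuousOn).def'

theorem intervalIntegral_smul_integral_inv_sub_smul [CompleteSpace E] {φ : ℝ → ℂ}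
    (hγ : Continuous γ) (hφ : IntegrableOn φ (Ι a b)) (hg : Continuous g)
    (hc : HasCompactSupport g) :
    ∫ t in a..b, φ t • ∫ w, (γ t - w)⁻¹ • g w =
      ∫ w, (∫ t in a..b, φ t / (γ t - w)) • g w := by
  calc ∫ t in a..b, φ t • ∫ w, (γ t - w)⁻¹ • g w
      = ∫ t in a..b, ∫ w, φ t • (γ t - w)⁻¹ • g w := by simp only [integral_smul]
    _ = ∫ w, ∫ t in a..b, φ t • (γ t - w)⁻¹ • g w :=
        intervalIntegral_integral_swap (integrable_prod_inv_sub_smul hγ hφ hg hc)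
    _ = ∫ w, (∫ t in a..b, φ t / (γ t - w)) • g w := by
        simp only [smul_smul, ← div_eq_mul_inv, intervalIntegral.integral_smul_const]

/-- The integral `∮ dζ / (ζ - w)` along `γ`, restricted to `[a, b]`. For a closed curve avoiding `w`
this is `2πi` times the winding number of the curve about `w`. -/
noncomputable def windingIntegral (γ : ℝ → ℂ) (a b : ℝ) (w : ℂ) : ℂ :=
  ∫ t in a..b, deriv γ t / (γ t - w)

theorem intervalIntegral_deriv_div_sub_div_sub (hγ : ContDiff ℝ 1 γ) {w : ℂ}
    (hz : z ∉ γ '' uIcc a b) (hw : w ∉ γ '' uIcc a b) (hwz : w ≠ z) :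
    ∫ t in a..b, deriv γ t / (z - γ t) / (γ t - w) =
      (z - w)⁻¹ * (windingIntegral γ a b w - windingIntegral γ a b z) := by
  have hdγ := hγ.continuous_deriv_one
  have hne {u : ℂ} (hu : u ∉ γ '' uIcc a b) {t : ℝ} (ht : t ∈ uIcc a b) : γ t - u ≠ 0 :=
    fun h ↦ hu ⟨t, ht, sub_eq_zero.mp h⟩
  have hint {u : ℂ} (hu : u ∉ γ '' uIcc a b) :
      IntervalIntegrable (fun t ↦ deriv γ t / (γ t - u)) volume a b :=
    (hdγ.continuousOn.div (hγ.continuous.sub continuous_const).continuousOn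
      fun t ht ↦ hne hu ht).intervalIntegrable
  rw [windingIntegral, windingIntegral, ← intervalIntegral.integral_sub (hint hw) (hint hz),
    ← intervalIntegral.integral_const_mul]
  refine intervalIntegral.integral_congr fun t ht ↦ ?_
  have hzt : z - γ t ≠ 0 := sub_ne_zero.mpr (sub_ne_zero.mp (hne hz ht)).symm
  have := hne hz ht
  have := hne hw ht
  have := sub_ne_zero.mpr hwz.symm
  field_simp
  ring

theorem intervalIntegral_deriv_div_smul [CompleteSpace E] (hγ : ContDiff ℝ 1 γ)
    (hf : ContDiff ℝ 1 f) (hc : HasCompactSupport f) (hz : z ∉ γ '' uIcc a b) :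
    (Real.pi : ℂ) • ∫ t in a..b, (deriv γ t / (z - γ t)) • f (γ t) =
      ∫ w, (windingIntegral γ a b w - windingIntegral γ a b z) • (z - w)⁻¹ • dbar f w := by
  have hφ : ContinuousOn (fun t ↦ deriv γ t / (z - γ t)) (uIcc a b) :=
    hγ.continuous_deriv_one.continuousOn.div (continuous_const.sub hγ.continuous).continuousOn
      fun t ht h ↦ hz ⟨t, ht, (sub_eq_zero.mp h).symm⟩
  have hnull : volume (γ '' uIcc a b) = 0 :=
    addHaar_image_eq_zero_of_finrank_lt volume hγ (by simp) _
  calc (Real.pi : ℂ) • ∫ t in a..b, (deriv γ t / (z - γ t)) • f (γ t)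
      = ∫ t in a..b, (deriv γ t / (z - γ t)) • ∫ w, (γ t - w)⁻¹ • dbar f w := by
        simp only [integral_inv_sub_smul_dbar hf hc, smul_comm _ (Real.pi : ℂ),
          intervalIntegral.integral_smul]
    _ = ∫ w, (∫ t in a..b, deriv γ t / (z - γ t) / (γ t - w)) • dbar f w :=
        intervalIntegral_smul_integral_inv_sub_smul hγ.continuous
          (hφ.intervalIntegrable.def') (continuous_dbar hf) (hasCompactSupport_dbar hc)
    _ = ∫ w, (windingIntegral γ a b w - windingIntegral γ a b z) • (z - w)⁻¹ • dbar f w := by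
        refine integral_congr_ae ?_
        filter_upwards [compl_mem_ae_iff.mpr hnull, Measure.ae_ne volume z] with w hw hwz
        rw [intervalIntegral_deriv_div_sub_div_sub hγ hz hw hwz, mul_comm, mul_smul]

end Curve

section Region

variable {E : Type*} [NormedAddCommGroup E] [NormedSpace ℂ E] [CompleteSpace E] {f : ℂ → E}
  {γ : ℝ → ℂ} {a b : ℝ} {Ω : Set ℂ} {z : ℂ}

theorem setIntegral_inv_sub_smul_dbar_of_hasCompactSupport (hf : ContDiff ℝ 1 f)
    (hc : HasCompactSupport f) (hΩ : MeasurableSet Ω) (hγ : ContDiff ℝ 1 γ)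
    (hwind : ∀ w ∉ γ '' uIcc a b, windingIntegral γ a b w = 2 * Real.pi * I * Ω.indicator 1 w)
    (hz : z ∉ γ '' uIcc a b) :
    ∫ w in Ω, (z - w)⁻¹ • dbar f w =
      (2 * I)⁻¹ • (∫ t in a..b, (deriv γ t / (z - γ t)) • f (γ t)) +
        (Real.pi : ℂ) • Ω.indicator f z := by
  set K : ℂ → E := fun w ↦ (z - w)⁻¹ • dbar f w
  have hint : Integrable K :=
    integrable_inv_sub_smul (continuous_dbar hf) (hasCompactSupport_dbar hc) z
  have hnull : volume (γ '' uIcc a b) = 0 :=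
    addHaar_image_eq_zero_of_finrank_lt volume hγ (by simp) _
  have hdiff : ∫ w, (windingIntegral γ a b w - windingIntegral γ a b z) • K w =
      (2 * Real.pi * I : ℂ) • ((∫ w in Ω, K w) - (Real.pi : ℂ) • Ω.indicator f z) := by
    calc ∫ w, (windingIntegral γ a b w - windingIntegral γ a b z) • K w
        = ∫ w, (2 * Real.pi * I : ℂ) • (Ω.indicator K w - (Ω.indicator 1 z : ℂ) • K w) := by
          refine integral_congr_ae ?_
          filter_upwards [compl_mem_ae_iff.mpr hnull] with w hw
          rw [hwind w hw, hwind z hz, ← mul_sub, mul_smul, sub_smul, indicator_one_smul_apply]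
      _ = (2 * Real.pi * I : ℂ) • ((∫ w in Ω, K w) - (Ω.indicator 1 z : ℂ) • ∫ w, K w) := by
          rw [integral_smul, integral_sub (hint.indicator hΩ) (hint.fun_smul _),
            integral_indicator hΩ, integral_smul]
      _ = (2 * Real.pi * I : ℂ) • ((∫ w in Ω, K w) - (Real.pi : ℂ) • Ω.indicator f z) := by
          rw [integral_inv_sub_smul_dbar hf hc, smul_comm, indicator_one_smul_apply]
  have h := intervalIntegral_deriv_div_smul hγ hf hc hz
  rw [hdiff, mul_right_comm, mul_comm _ (Real.pi : ℂ), mul_smul] at h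
  rw [smul_right_injective E (ofReal_ne_zero.mpr Real.pi_ne_zero) h,
    inv_smul_smul₀ (mul_ne_zero two_ne_zero I_ne_zero), sub_add_cancel]

theorem setIntegral_inv_sub_smul_dbar (hΩ : IsCompact Ω) (hf : ∀ w ∈ Ω, ContDiffAt ℝ 1 f w)
    (hγ : ContDiff ℝ 1 γ) (hγΩ : γ '' uIcc a b ⊆ Ω)
    (hwind : ∀ w ∉ γ '' uIcc a b, windingIntegral γ a b w = 2 * Real.pi * I * Ω.indicator 1 w)
    (hz : z ∉ γ '' uIcc a b) :
    ∫ w in Ω, (z - w)⁻¹ • dbar f w =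
      (2 * I)⁻¹ • (∫ t in a..b, (deriv γ t / (z - γ t)) • f (γ t)) +
        (Real.pi : ℂ) • Ω.indicator f z := by
  obtain ⟨g, hg, hgc, hgf⟩ := exists_contDiff_hasCompactSupport_eventuallyEq_nhdsSet (n := 1) hΩ
    (eventually_nhdsSet_iff_forall.mpr fun w hw ↦ (hf w hw).eventually (by simp))
  have hgf_nhds : ∀ w ∈ Ω, g =ᶠ[𝓝 w] f := eventually_nhdsSet_iff_forall.mp hgf
  have hgf_on : EqOn g f Ω := fun w hw ↦ (hgf_nhds w hw).self_of_nhds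
  have hformula :=
    setIntegral_inv_sub_smul_dbar_of_hasCompactSupport hg hgc hΩ.measurableSet hγ hwind hz
  have hregion : EqOn (fun w ↦ (z - w)⁻¹ • dbar g w) (fun w ↦ (z - w)⁻¹ • dbar f w) Ω :=
    fun w hw ↦ congrArg _ (dbar_congr (hgf_nhds w hw))
  have hboundary : EqOn (fun t ↦ (deriv γ t / (z - γ t)) • g (γ t))
      (fun t ↦ (deriv γ t / (z - γ t)) • f (γ t)) (uIcc a b) :=
    fun t ht ↦ congrArg _ (hgf_on (hγΩ ⟨t, ht, rfl⟩))
  rwa [setIntegral_congr_fun hΩ.measurableSet hregion, intervalIntegral.integral_congr hboundary,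
    indicator_congr hgf_on] at hformula

end Region

theorem stmt_0_general
    (Ω : Set ℂ) (hΩ : IsCompact Ω)
    (γ : ℝ → ℂ) (L : ℝ) (hL : 0 < L)
    (hγ : ContDiff ℝ 1 γ)
    (himg : γ '' Set.Ico 0 L = frontier Ω)
    (horient : ∀ z ∉ frontier Ω,
      ∫ t in (0 : ℝ)..L, deriv γ t / (γ t - z)
        = 2 * Real.pi * Complex.I * Set.indicator Ω 1 z)
    (k : ℂ) (hk : k ≠ 0) (z : ℂ) (hz : z ∉ frontier Ω) :
    (∫ w in Ω,
        Complex.exp ((starRingEnd ℂ) k * (starRingEnd ℂ) w - k * w) / (z - w))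
      = (1 / (2 * Complex.I * (starRingEnd ℂ) k)) *
          (∫ t in (0 : ℝ)..L,
            Complex.exp ((starRingEnd ℂ) k * (starRingEnd ℂ) (γ t) - k * γ t)
              / (z - γ t) * deriv γ t)
        + ((Real.pi : ℂ) / (starRingEnd ℂ) k) *
            Complex.exp ((starRingEnd ℂ) k * (starRingEnd ℂ) z - k * z) *
            Set.indicator Ω 1 z := by
  have hcurve : γ '' uIcc 0 L = frontier Ω :=
    image_uIcc_eq_of_image_Ico_eq hγ.continuous hL isClosed_frontier himg
  have hconj : conj k ≠ 0 := (map_ne_zero _).mpr hk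
  have hexp : ContDiff ℝ 1 fun w ↦ exp (conj k * conj w - k * w) :=
    ((contDiff_const.mul conjCLE.contDiff).sub (contDiff_const.mul contDiff_id)).cexp
  have hpompeiu := setIntegral_inv_sub_smul_dbar hΩ (fun w _ ↦ hexp.contDiffAt) hγ
    (hcurve.trans_subset hΩ.isClosed.frontier_subset) (by rwa [hcurve]) (by rwa [hcurve])
  have hkernel (w : ℂ) : (z - w)⁻¹ * (conj k * exp (conj k * conj w - k * w)) =
      conj k * (exp (conj k * conj w - k * w) / (z - w)) := by ring
  rw [← indicator_one_smul_apply (R := ℂ)] at hpompeiu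
  simp only [dbar_exp_mul_conj_sub_mul, smul_eq_mul, hkernel, integral_const_mul,
    div_mul_comm (deriv γ _)] at hpompeiu
  rw [← mul_right_inj' hconj, hpompeiu]
  field_simp

/-- For a compact set `Ω ⊂ ℂ` whose boundary is a `C¹` simple closed
curve, positively oriented and parametrized by `γ` (positive orientation encoded by the
winding-number condition), for `k ≠ 0` and `z ∉ ∂Ω`,
`∫_Ω e^{k̄w̄ − kw}/(z − w) dL(w)
  = (1/(2i k̄)) ∮_{∂Ω} e^{k̄w̄ − kw}/(z − w) dw + (π/k̄) e^{k̄z̄ − kz} 1_Ω(z)`. -/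
theorem stmt_0
    (Ω : Set ℂ) (hΩ : IsCompact Ω)
    (γ : ℝ → ℂ) (L : ℝ) (hL : 0 < L)
    (hγ : ContDiff ℝ 1 γ) (hper : Function.Periodic γ L)
    (hinj : Set.InjOn γ (Set.Ico 0 L))
    (himg : γ '' Set.Ico 0 L = frontier Ω)
    (horient : ∀ z ∉ frontier Ω,
      ∫ t in (0:ℝ)..L, deriv γ t / (γ t - z)
        = 2 * Real.pi * Complex.I * Set.indicator Ω 1 z)
    (k : ℂ) (hk : k ≠ 0) (z : ℂ) (hz : z ∉ frontier Ω) :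
    (∫ w in Ω,
        Complex.exp ((starRingEnd ℂ) k * (starRingEnd ℂ) w - k * w) / (z - w))
      = (1 / (2 * Complex.I * (starRingEnd ℂ) k)) *
          (∫ t in (0:ℝ)..L,
            Complex.exp ((starRingEnd ℂ) k * (starRingEnd ℂ) (γ t) - k * γ t)
              / (z - γ t) * deriv γ t)
        + ((Real.pi : ℂ) / (starRingEnd ℂ) k) *
            Complex.exp ((starRingEnd ℂ) k * (starRingEnd ℂ) z - k * z) *
            Set.indicator Ω 1 z :=
  stmt_0_general Ω hΩ γ L hL hγ himg horient k hk z hz
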